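/- For each integer m > 5/2 (i.e. m ≥ 3) there is a constant C such that for all f, g in appropriate Sobolev spaces on ℝ³: Σ_{|α| ≤ m} ‖D^α(fg) − (D^α f) g‖_{L²} ≤ C (‖f‖_{H^{m−1}} ‖∇g‖_{L^∞} + ‖f‖_{L^∞} ‖g‖_{H^m}). -/

import Mathlib

open MeasureTheory

/-- Partial derivative `∂ᵢ f` of a scalar function on `ℝ³`. -/
noncomputable def pd (i : Fin 3) (f : (Fin 3 → ℝ) → ℝ) : (Fin 3 → ℝ) → ℝ :=
  fun x => fderiv ℝ f x (Pi.single i 1)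

/-- Multi-index derivative `D^α` with `α = (a, b, c)`. -/
noncomputable def Dmulti (a b c : ℕ) (f : (Fin 3 → ℝ) → ℝ) : (Fin 3 → ℝ) → ℝ :=
  (pd 0)^[a] ((pd 1)^[b] ((pd 2)^[c] f))

/-- Squared Sobolev `H^m` norm. -/
noncomputable def sobSq (m : ℕ) (f : (Fin 3 → ℝ) → ℝ) : ℝ :=
  ∑ k ∈ Finset.range (m + 1), ∫ x : Fin 3 → ℝ, ‖iteratedFDeriv ℝ k f x‖ ^ 2

/-- Sobolev `H^m` norm. -/
noncomputable def sob (m : ℕ) (f : (Fin 3 → ℝ) → ℝ) : ℝ := Real.sqrt (sobSq m f)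

/-- `L²` norm. -/
noncomputable def l2 (f : (Fin 3 → ℝ) → ℝ) : ℝ := Real.sqrt (∫ x : Fin 3 → ℝ, f x ^ 2)

/-- `L^∞` norm. -/
noncomputable def linf (f : (Fin 3 → ℝ) → ℝ) : ℝ := (eLpNorm f ⊤ volume).toReal

/-- `L^∞` norm of the gradient. -/
noncomputable def gradLinf (f : (Fin 3 → ℝ) → ℝ) : ℝ :=
  (eLpNorm (fun x => ‖fderiv ℝ f x‖) ⊤ volume).toReal

/-- Multi-indices `α ∈ ℕ³` with `|α| ≤ m`. -/
def idxSet (m : ℕ) : Finset (ℕ × ℕ × ℕ) :=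
  (Finset.range (m + 1) ×ˢ Finset.range (m + 1) ×ˢ Finset.range (m + 1)).filter
    (fun p => p.1 + p.2.1 + p.2.2 ≤ m)

open scoped SchwartzMap LineDeriv ENNReal

theorem Real.hasDerivAt_abs_rpow_mul_self (t : ℝ) {s : ℝ} (hs : 0 < s) :
    HasDerivAt (fun t : ℝ ↦ |t| ^ s * t) ((s + 1) * |t| ^ s) t := by
  rcases eq_or_ne t 0 with rfl | ht
  · rw [hasDerivAt_iff_tendsto_slope]
    have h : Filter.Tendsto (fun t : ℝ ↦ |t| ^ s) (nhdsWithin 0 {0}ᶜ)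
        (nhds ((s + 1) * |0| ^ s)) := by
      have : Continuous fun t : ℝ ↦ |t| ^ s := continuous_abs.rpow_const fun _ ↦ Or.inr hs.le
      simpa [Real.zero_rpow hs.ne'] using (this.tendsto 0).mono_left nhdsWithin_le_nhds
    refine h.congr' ?_
    filter_upwards [self_mem_nhdsWithin] with u hu
    have hu : u ≠ 0 := hu
    simp [slope, Real.zero_rpow hs.ne']
    field_simp
  · have h := ((hasDerivAt_abs ht).rpow_const (p := s) (Or.inl (abs_ne_zero.2 ht))).mul
      (hasDerivAt_id t)
    convert! h using 1
    have h1 : |t| ^ s = |t| ^ (s - 1) * |t| := by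
      rw [← Real.rpow_add_one (abs_ne_zero.2 ht)]; simp
    have h2 : |t| = SignType.sign t * t := by simp
    simp only [id]
    rw [h1]
    nth_rewrite 2 [h2]
    nth_rewrite 4 [h2]
    ring


theorem lpNorm_mul_le {α : Type*} [MeasurableSpace α] {μ : Measure α} {f g : α → ℝ}
    {p q r : ℝ≥0∞} [ENNReal.HolderTriple p q r] (hf : MemLp f p μ) (hg : MemLp g q μ) :
    lpNorm (f * g) r μ ≤ lpNorm f p μ * lpNorm g q μ := by
  rw [← toReal_eLpNorm hf.1, ← toReal_eLpNorm hg.1, ← toReal_eLpNorm (hf.1.mul hg.1),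
    ← ENNReal.toReal_mul]
  exact ENNReal.toReal_mono (ENNReal.mul_ne_top hf.2.ne hg.2.ne)
    (eLpNorm_smul_le_mul_eLpNorm (p := p) (q := q) (r := r) (φ := f) (f := g) hg.1 hf.1)

theorem memLp_abs_rpow {α : Type*} [MeasurableSpace α] {μ : Measure α} {f : α → ℝ}
    {p : ℝ≥0∞} {s : ℝ} (hs : 0 < s) (hf : MemLp f (p * ENNReal.ofReal s) μ) :
    MemLp (fun x ↦ |f x| ^ s) p μ := by
  refine ⟨(hf.1.norm.aemeasurable.pow_const s).aestronglyMeasurable, ?_⟩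
  have h := eLpNorm_norm_rpow (p := p) (μ := μ) f hs
  simp only [Real.norm_eq_abs] at h
  rw [h]
  exact ENNReal.rpow_lt_top_of_nonneg hs.le hf.2.ne

theorem lpNorm_abs_rpow {α : Type*} [MeasurableSpace α] {μ : Measure α} {f : α → ℝ}
    {p : ℝ≥0∞} {s : ℝ} (hs : 0 < s) (hf : MemLp f (p * ENNReal.ofReal s) μ) :
    lpNorm (fun x ↦ |f x| ^ s) p μ = lpNorm f (p * ENNReal.ofReal s) μ ^ s := by
  rw [← toReal_eLpNorm (memLp_abs_rpow hs hf).1, ← toReal_eLpNorm hf.1, ENNReal.toReal_rpow]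
  congr 1
  simpa only [Real.norm_eq_abs] using eLpNorm_norm_rpow (p := p) (μ := μ) f hs

theorem lpNorm_rpow_eq_integral {α : Type*} [MeasurableSpace α] {μ : Measure α} {f : α → ℝ}
    {p : ℝ} (hp : 0 < p) (hf : AEStronglyMeasurable f μ) :
    lpNorm f (ENNReal.ofReal p) μ ^ p = ∫ x, |f x| ^ p ∂μ := by
  rw [lpNorm_eq_integral_norm_rpow_toReal (by simpa using hp) ENNReal.ofReal_ne_top hf,
    ENNReal.toReal_ofReal hp.le, Real.rpow_inv_rpow (by positivity) hp.ne']
  simp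

namespace SchwartzMap

variable {E : Type*} [NormedAddCommGroup E] [NormedSpace ℝ E] [FiniteDimensional ℝ E]
  [MeasurableSpace E] [BorelSpace E] {μ : Measure E} [μ.IsAddHaarMeasure]

theorem integral_abs_lineDerivOp_rpow_le (v : 𝓢(E, ℝ)) (e : E) {s : ℝ} (hs : 0 < s) :
    ∫ x, |∂_{e} v x| ^ (s + 2) ∂μ ≤
      (s + 1) * ∫ x, |v x * ∂_{e} (∂_{e} v) x * |∂_{e} v x| ^ s| ∂μ := by
  set z := ∂_{e} v with hz
  have hd (x : E) : HasFDerivAt (fun x ↦ |z x| ^ s * z x)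
      (((s + 1) * |z x| ^ s) • fderiv ℝ z x) x :=
    (Real.hasDerivAt_abs_rpow_mul_self (z x) hs).comp_hasFDerivAt x (z.hasFDerivAt x)
  have hψ : Continuous fun x ↦ |z x| ^ s :=
    (continuous_abs.comp z.continuous).rpow_const fun _ ↦ Or.inr hs.le
  obtain ⟨C, -, hC⟩ := z.decay 0 0
  have hb (x : E) : ‖|z x| ^ s‖ ≤ C ^ s := by
    rw [Real.norm_of_nonneg (by positivity)]
    gcongr
    simpa using hC x
  have hvw : Integrable (fun x ↦ v x * ∂_{e} z x) μ :=
    MemLp.integrable_mul (v.memLp 2 μ) ((∂_{e} z).memLp 2 μ)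
  have hzz : Integrable (fun x ↦ z x * z x) μ :=
    MemLp.integrable_mul (z.memLp 2 μ) (z.memLp 2 μ)
  have hvz : Integrable (fun x ↦ v x * z x) μ :=
    MemLp.integrable_mul (v.memLp 2 μ) (z.memLp 2 μ)
  have h1 : Integrable (fun x ↦ fderiv ℝ v x e * (|z x| ^ s * z x)) μ := by
    refine (hzz.mul_bdd hψ.aestronglyMeasurable (ae_of_all _ hb)).congr (ae_of_all _ fun x ↦ ?_)
    simp only [hz, lineDerivOp_apply_eq_fderiv]
    ring
  have h3 : Integrable (fun x ↦ v x * (|z x| ^ s * z x)) μ := by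
    refine (hvz.mul_bdd hψ.aestronglyMeasurable (ae_of_all _ hb)).congr (ae_of_all _ fun x ↦ ?_)
    ring
  have h2' := hvw.mul_bdd hψ.aestronglyMeasurable (ae_of_all _ hb)
  have h2 : Integrable (fun x ↦ v x * fderiv ℝ (fun x ↦ |z x| ^ s * z x) x e) μ := by
    refine (h2'.const_mul (s + 1)).congr (ae_of_all _ fun x ↦ ?_)
    simp only [(hd x).fderiv, lineDerivOp_apply_eq_fderiv]
    simp
    ring
  have key := integral_mul_fderiv_eq_neg_fderiv_mul_of_integrable h1 h2 h3
    (fun x _ ↦ v.differentiableAt) (fun x _ ↦ (hd x).differentiableAt)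
  calc ∫ x, |z x| ^ (s + 2) ∂μ = ∫ x, fderiv ℝ v x e * (|z x| ^ s * z x) ∂μ := by
        congr 1 with x
        rw [← lineDerivOp_apply_eq_fderiv, ← hz, Real.rpow_add_of_nonneg (abs_nonneg _) hs.le
          zero_le_two, Real.rpow_two, sq_abs]
        ring
    _ = -∫ x, v x * fderiv ℝ (fun x ↦ |z x| ^ s * z x) x e ∂μ := by rw [key, neg_neg]
    _ = -((s + 1) * ∫ x, v x * ∂_{e} z x * |z x| ^ s ∂μ) := by
        rw [← integral_const_mul]
        congr 2 with x
        simp only [(hd x).fderiv, lineDerivOp_apply_eq_fderiv]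
        simp
        ring
    _ ≤ (s + 1) * ∫ x, |v x * ∂_{e} z x * |z x| ^ s| ∂μ := by
        rw [← mul_neg]
        gcongr
        exact (neg_le_abs _).trans abs_integral_le_integral_abs

theorem lpNorm_lineDerivOp_sq_le (v : 𝓢(E, ℝ)) (e : E) {p : ℝ} (hp : 2 < p) (q r : ℝ≥0∞)
    [ENNReal.HolderTriple q r (ENNReal.ofReal (p / 2))] :
    lpNorm (∂_{e} v : 𝓢(E, ℝ)) (ENNReal.ofReal p) μ ^ 2 ≤
      (p - 1) * (lpNorm v q μ * lpNorm (∂_{e} (∂_{e} v) : 𝓢(E, ℝ)) r μ) := by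
  set z := ∂_{e} v with hz
  set A := lpNorm z (ENNReal.ofReal p) μ
  have hA : 0 ≤ A := lpNorm_nonneg
  have hs : 0 < p - 2 := by linarith
  have hB : 0 ≤ (p - 1) * (lpNorm v q μ * lpNorm (∂_{e} z : 𝓢(E, ℝ)) r μ) :=
    mul_nonneg (by linarith) (mul_nonneg lpNorm_nonneg lpNorm_nonneg)
  rcases hA.eq_or_lt with h0 | hA0
  · simpa [← h0] using hB
  have hexp : ENNReal.ofReal (p / (p - 2)) * ENNReal.ofReal (p - 2) = ENNReal.ofReal p := by
    rw [← ENNReal.ofReal_mul (by positivity), div_mul_cancel₀ _ hs.ne']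
  have : ENNReal.HolderTriple (ENNReal.ofReal (p / 2)) (ENNReal.ofReal (p / (p - 2))) 1 := by
    constructor
    rw [← ENNReal.ofReal_inv_of_pos (by positivity), ← ENNReal.ofReal_inv_of_pos (by positivity),
      ← ENNReal.ofReal_add (by positivity) (by positivity), inv_one, ← ENNReal.ofReal_one]
    congr 1
    field_simp
    ring
  have hzp : MemLp z (ENNReal.ofReal (p / (p - 2)) * ENNReal.ofReal (p - 2)) μ := z.memLp _ μ
  have hψ := memLp_abs_rpow hs hzp
  have hvw : MemLp (⇑v * ⇑(∂_{e} z : 𝓢(E, ℝ))) (ENNReal.ofReal (p / 2)) μ :=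
    ((∂_{e} z : 𝓢(E, ℝ)).memLp r μ).smul (v.memLp q μ)
  have h1 : ∫ x, |v x * ∂_{e} z x * |z x| ^ (p - 2)| ∂μ ≤
      lpNorm v q μ * lpNorm (∂_{e} z : 𝓢(E, ℝ)) r μ * A ^ (p - 2) :=
    calc _ = lpNorm ((⇑v * ⇑(∂_{e} z : 𝓢(E, ℝ))) * fun x ↦ |z x| ^ (p - 2)) 1 μ := by
          rw [lpNorm_one_eq_integral_norm (hvw.1.mul hψ.1)]
          rfl
      _ ≤ lpNorm (⇑v * ⇑(∂_{e} z : 𝓢(E, ℝ))) (ENNReal.ofReal (p / 2)) μ *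
          lpNorm (fun x ↦ |z x| ^ (p - 2)) (ENNReal.ofReal (p / (p - 2))) μ :=
          lpNorm_mul_le hvw hψ
      _ ≤ _ := by
          rw [lpNorm_abs_rpow hs hzp, hexp]
          gcongr
          exact lpNorm_mul_le (v.memLp q μ) ((∂_{e} z : 𝓢(E, ℝ)).memLp r μ)
  have h2 := integral_abs_lineDerivOp_rpow_le (μ := μ) v e hs
  rw [← hz, sub_add_cancel, ← lpNorm_rpow_eq_integral (by linarith)
    z.continuous.aestronglyMeasurable] at h2
  have h3 : A ^ p = A ^ 2 * A ^ (p - 2) := by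
    rw [← Real.rpow_natCast, ← Real.rpow_add hA0]
    norm_num
  refine le_of_mul_le_mul_right ?_ (Real.rpow_pos_of_pos hA0 (p - 2))
  calc A ^ 2 * A ^ (p - 2) = A ^ p := h3.symm
    _ ≤ _ := h2
    _ ≤ (p - 2 + 1) * (lpNorm v q μ * lpNorm (∂_{e} z : 𝓢(E, ℝ)) r μ * A ^ (p - 2)) := by
        gcongr
    _ = _ := by ring

end SchwartzMap

theorem le_max_endpoints_of_sq_le_mul {d : ℕ → ℝ} {n : ℕ} (hd : ∀ i, 0 ≤ d i)
    (h : ∀ i, i + 2 ≤ n → d (i + 1) ^ 2 ≤ d i * d (i + 2)) {i : ℕ} (hi : i ≤ n) :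
    d i ≤ max (d 0) (d n) := by
  induction n generalizing i with
  | zero => simp [Nat.le_zero.1 hi]
  | succ k ih =>
    have ih' : ∀ j ≤ k, d j ≤ max (d 0) (d k) := fun j hj ↦ ih (fun l hl ↦ h l (by omega)) hj
    have hk : d k ≤ max (d 0) (d (k + 1)) := by
      rcases k with _ | l
      · exact le_max_left _ _
      rcases le_total (d (l + 1)) (d 0) with h0 | h0
      · exact h0.trans (le_max_left _ _)
      refine le_trans ?_ (le_max_right _ _)
      have h3 := ih' l (by omega)
      rw [max_eq_right h0] at h3
      rcases (hd (l + 1)).eq_or_lt with h1 | h1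
      · exact h1 ▸ hd _
      · nlinarith [h l le_rfl, mul_le_mul_of_nonneg_right h3 (hd (l + 2))]
    rcases hi.eq_or_lt with rfl | hi
    · exact le_max_right _ _
    · exact (ih' i (by omega)).trans (max_le (le_max_left _ _) hk)

theorem mul_le_of_sq_le_mul {a b : ℕ → ℝ} {n : ℕ} {K : ℝ} (hK : 1 ≤ K)
    (ha : ∀ i, 0 ≤ a i) (hb : ∀ i, 0 ≤ b i)
    (ha' : ∀ i, i + 2 ≤ n → a (i + 1) ^ 2 ≤ K * (a i * a (i + 2)))
    (hb' : ∀ i, i + 2 ≤ n → b (i + 1) ^ 2 ≤ K * (b i * b (i + 2)))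
    {i j : ℕ} (hij : i + j = n) :
    a i * b j ≤ K ^ n ^ 2 * (a 0 * b n + a n * b 0) := by
  have hK0 : 0 ≤ K := by linarith
  have hc (i : ℕ) : 0 ≤ a i * b (n - i) := mul_nonneg (ha _) (hb _)
  have h := le_max_endpoints_of_sq_le_mul (d := fun i ↦ K ^ i ^ 2 * (a i * b (n - i))) (n := n)
    (fun i ↦ mul_nonneg (by positivity) (hc i)) (fun i hi ↦ ?_) (show i ≤ n by omega)
  · obtain rfl : j = n - i := by omega
    calc a i * b (n - i) ≤ K ^ i ^ 2 * (a i * b (n - i)) :=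
          le_mul_of_one_le_left (hc i) (one_le_pow₀ hK)
      _ ≤ _ := h
      _ ≤ K ^ n ^ 2 * (a 0 * b n) + K ^ n ^ 2 * (a n * b 0) := by
          simp only [Nat.sub_self, Nat.sub_zero]
          refine max_le ?_ ?_
          · have := mul_nonneg (pow_nonneg hK0 (n ^ 2)) (hc n)
            have h1 : K ^ 0 ^ 2 ≤ K ^ n ^ 2 := pow_le_pow_right₀ hK (by simp)
            have h2 := mul_le_mul_of_nonneg_right h1 (mul_nonneg (ha 0) (hb n))
            simp only [Nat.sub_self] at this
            linarith
          · have := mul_nonneg (pow_nonneg hK0 (n ^ 2)) (hc 0)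
            simp only [Nat.sub_zero] at this
            linarith
      _ = _ := by ring
  · obtain ⟨l, rfl⟩ : ∃ l, n = l + i + 2 := ⟨n - i - 2, by omega⟩
    have e0 : l + i + 2 - i = l + 2 := by omega
    have e1 : l + i + 2 - (i + 1) = l + 1 := by omega
    have e2 : l + i + 2 - (i + 2) = l := by omega
    simp only [e0, e1, e2]
    calc (K ^ (i + 1) ^ 2 * (a (i + 1) * b (l + 1))) ^ 2
        = (K ^ (i + 1) ^ 2) ^ 2 * (a (i + 1) ^ 2 * b (l + 1) ^ 2) := by ring
      _ ≤ (K ^ (i + 1) ^ 2) ^ 2 * (K * (a i * a (i + 2)) * (K * (b l * b (l + 2)))) := by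
          have := mul_nonneg hK0 (mul_nonneg (ha i) (ha (i + 2)))
          gcongr
          · exact ha' i hi
          · exact hb' l (by omega)
      _ = _ := by ring

/-- The iterated partial derivative of a Schwartz function along a word of coordinate directions,
the head of the word being differentiated last. -/
noncomputable def wordDeriv (w : List (Fin 3)) (f : 𝓢(Fin 3 → ℝ, ℝ)) : 𝓢(Fin 3 → ℝ, ℝ) :=
  w.foldr (fun i u ↦ ∂_{(Pi.single i 1 : Fin 3 → ℝ)} u) f

theorem coe_wordDeriv (w : List (Fin 3)) (f : 𝓢(Fin 3 → ℝ, ℝ)) :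
    ⇑(wordDeriv w f) = w.foldr pd f := by
  induction w with
  | nil => rfl
  | cons i w ih =>
    rw [List.foldr_cons, ← ih]
    rfl

theorem wordDeriv_append (w₁ w₂ : List (Fin 3)) (f : 𝓢(Fin 3 → ℝ, ℝ)) :
    wordDeriv (w₁ ++ w₂) f = wordDeriv w₁ (wordDeriv w₂ f) :=
  List.foldr_append

theorem foldr_replicate_eq_iterate {α β : Type*} (F : α → β → β) (a : α) (n : ℕ) (b : β) :
    (List.replicate n a).foldr F b = (F a)^[n] b := by
  induction n with
  | zero => rfl
  | succ n ih => rw [List.replicate_succ, List.foldr_cons, ih, Function.iterate_succ_apply']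

theorem Dmulti_eq_foldr (a b c : ℕ) (f : (Fin 3 → ℝ) → ℝ) :
    Dmulti a b c f =
      (List.replicate a (0 : Fin 3) ++
        (List.replicate b (1 : Fin 3) ++ List.replicate c (2 : Fin 3))).foldr pd f := by
  simp only [List.foldr_append, foldr_replicate_eq_iterate, Dmulti]

theorem abs_apply_single_le (L : (Fin 3 → ℝ) →L[ℝ] ℝ) (i : Fin 3) :
    |L (Pi.single i 1)| ≤ ‖L‖ := by
  simpa [Pi.norm_single] using L.le_opNorm (Pi.single i 1)

theorem norm_iteratedFDeriv_wordDeriv_le (w : List (Fin 3)) (f : 𝓢(Fin 3 → ℝ, ℝ)) (k : ℕ)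
    (x : Fin 3 → ℝ) :
    ‖iteratedFDeriv ℝ k (wordDeriv w f) x‖ ≤ ‖iteratedFDeriv ℝ (k + w.length) f x‖ := by
  induction w generalizing k with
  | nil => rfl
  | cons i w ih =>
    have h : ⇑(wordDeriv (i :: w) f) =
        ⇑(ContinuousLinearMap.apply ℝ ℝ (Pi.single i 1 : Fin 3 → ℝ)) ∘ fderiv ℝ (wordDeriv w f) :=
      rfl
    have hs : ContDiff ℝ k (fderiv ℝ (wordDeriv w f)) :=
      ((wordDeriv w f).smooth ⊤).fderiv_right (by exact_mod_cast le_top)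
    rw [h]
    refine (ContinuousLinearMap.norm_iteratedFDeriv_comp_left _ hs.contDiffAt le_rfl).trans ?_
    rw [norm_iteratedFDeriv_fderiv]
    refine (mul_le_of_le_one_left (norm_nonneg _) ?_).trans ((ih (k + 1)).trans_eq ?_)
    · refine ContinuousLinearMap.opNorm_le_bound _ zero_le_one fun L ↦ ?_
      simpa using abs_apply_single_le L i
    · rw [List.length_cons, Nat.add_assoc, Nat.add_comm 1]

theorem integrable_norm_iteratedFDeriv_sq (f : 𝓢(Fin 3 → ℝ, ℝ)) (k : ℕ) :
    Integrable fun x ↦ ‖iteratedFDeriv ℝ k f x‖ ^ 2 := by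
  obtain ⟨C, -, hC⟩ := f.decay 0 k
  have h := f.integrable_pow_mul_iteratedFDeriv volume 0 k
  simp only [pow_zero, one_mul] at h hC
  refine (h.mul_bdd (c := C) h.1 (ae_of_all _ fun x ↦ ?_)).congr (ae_of_all _ fun x ↦ ?_)
  · simpa using hC x
  · exact (sq _).symm

theorem l2_eq_lpNorm {f : (Fin 3 → ℝ) → ℝ} (hf : AEStronglyMeasurable f volume) :
    l2 f = lpNorm f 2 volume := by
  rw [lpNorm_eq_integral_norm_rpow_toReal two_ne_zero ENNReal.ofNat_ne_top hf, l2,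
    Real.sqrt_eq_rpow]
  simp

theorem lpNorm_wordDeriv_le_sob {w : List (Fin 3)} {m : ℕ} (hw : w.length ≤ m)
    (f : 𝓢(Fin 3 → ℝ, ℝ)) : lpNorm (wordDeriv w f) 2 volume ≤ sob m f := by
  rw [← l2_eq_lpNorm (wordDeriv w f).continuous.aestronglyMeasurable]
  refine Real.sqrt_le_sqrt ?_
  have h : ∫ x, wordDeriv w f x ^ 2 ≤ ∫ x, ‖iteratedFDeriv ℝ w.length f x‖ ^ 2 := by
    refine integral_mono_of_nonneg (ae_of_all _ fun x ↦ sq_nonneg _)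
      (integrable_norm_iteratedFDeriv_sq f _) (ae_of_all _ fun x ↦ ?_)
    have := norm_iteratedFDeriv_wordDeriv_le w f 0 x
    rw [norm_iteratedFDeriv_zero, Nat.zero_add] at this
    exact sq_le_sq' (by linarith [neg_le_of_abs_le this]) (le_of_abs_le this)
  refine h.trans (Finset.single_le_sum
    (f := fun k ↦ ∫ x, ‖iteratedFDeriv ℝ k f x‖ ^ 2) (fun k _ ↦ ?_)
    (Finset.mem_range.2 (Nat.lt_succ_of_le hw)))
  exact integral_nonneg fun x ↦ by positivity

theorem lpNorm_top_wordDeriv_singleton_le (i : Fin 3) (g : 𝓢(Fin 3 → ℝ, ℝ)) :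
    lpNorm (wordDeriv [i] g) ⊤ volume ≤ gradLinf g := by
  have hm : MemLp (fun x ↦ ‖fderiv ℝ g x‖) ⊤ volume :=
    ((SchwartzMap.fderivCLM ℝ (Fin 3 → ℝ) ℝ g).memLp ⊤ volume).norm
  rw [gradLinf, toReal_eLpNorm hm.1]
  refine lpNorm_mono_real hm fun x ↦ ?_
  exact abs_apply_single_le (fderiv ℝ g x) i

/-- The exponent `2n / j`, with value `∞` at `j = 0`. -/
noncomputable def derivExponent (n j : ℕ) : ℝ≥0∞ := (ENNReal.ofReal (j / (2 * n)))⁻¹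

theorem derivExponent_zero (n : ℕ) : derivExponent n 0 = ⊤ := by
  simp [derivExponent]

theorem derivExponent_self {n : ℕ} (hn : n ≠ 0) : derivExponent n n = 2 := by
  have : (n : ℝ) / (2 * n) = 2⁻¹ := by field_simp
  rw [derivExponent, this, ENNReal.ofReal_inv_of_pos two_pos, inv_inv, ENNReal.ofReal_ofNat]

theorem holderTriple_derivExponent (n i j : ℕ) :
    ENNReal.HolderTriple (derivExponent n i) (derivExponent n j) (derivExponent n (i + j)) := by
  constructor
  simp only [derivExponent, inv_inv]
  rw [← ENNReal.ofReal_add (by positivity) (by positivity)]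
  push_cast
  ring_nf

theorem derivExponent_eq_ofReal {n j : ℕ} (hn : n ≠ 0) (hj : j ≠ 0) :
    derivExponent n j = ENNReal.ofReal (2 * n / j) := by
  rw [derivExponent, ← ENNReal.ofReal_inv_of_pos (by positivity), inv_div]

/-- The largest `L^{2n/j}` norm among the partial derivatives of order `j`. -/
noncomputable def derivSup (n j : ℕ) (f : 𝓢(Fin 3 → ℝ, ℝ)) : ℝ :=
  ⨆ w : List.Vector (Fin 3) j, lpNorm (wordDeriv w.1 f) (derivExponent n j) volume

theorem derivSup_nonneg (n j : ℕ) (f : 𝓢(Fin 3 → ℝ, ℝ)) : 0 ≤ derivSup n j f :=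
  Real.iSup_nonneg fun _ ↦ lpNorm_nonneg

theorem lpNorm_wordDeriv_le_derivSup (n : ℕ) {j : ℕ} {w : List (Fin 3)} (hw : w.length = j)
    (f : 𝓢(Fin 3 → ℝ, ℝ)) :
    lpNorm (wordDeriv w f) (derivExponent n j) volume ≤ derivSup n j f :=
  le_ciSup (f := fun w : List.Vector (Fin 3) j ↦
    lpNorm (wordDeriv w.1 f) (derivExponent n j) volume)
    (Set.finite_range _).bddAbove ⟨w, hw⟩

theorem derivSup_le {n j : ℕ} {f : 𝓢(Fin 3 → ℝ, ℝ)} {B : ℝ}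
    (h : ∀ w : List (Fin 3), w.length = j →
      lpNorm (wordDeriv w f) (derivExponent n j) volume ≤ B) : derivSup n j f ≤ B :=
  haveI : Nonempty (List.Vector (Fin 3) j) := ⟨List.Vector.replicate j 0⟩
  ciSup_le fun w ↦ h w.1 w.2

theorem derivSup_zero_le (n : ℕ) (f : 𝓢(Fin 3 → ℝ, ℝ)) :
    derivSup n 0 f ≤ lpNorm f ⊤ volume := by
  refine derivSup_le fun w hw ↦ ?_
  rw [List.length_eq_zero_iff.1 hw, derivExponent_zero]
  rfl

theorem derivSup_succ_sq_le {n j : ℕ} (hj : j + 2 ≤ n) (f : 𝓢(Fin 3 → ℝ, ℝ)) :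
    derivSup n (j + 1) f ^ 2 ≤ (2 * n) * (derivSup n j f * derivSup n (j + 2) f) := by
  have hn : n ≠ 0 := by omega
  have hn0 : (0 : ℝ) < n := by positivity
  have hR := mul_nonneg (mul_pos two_pos hn0).le
    (mul_nonneg (derivSup_nonneg n j f) (derivSup_nonneg n (j + 2) f))
  refine (Real.le_sqrt (derivSup_nonneg _ _ _) hR).1 (derivSup_le fun w hw ↦ ?_)
  refine (Real.le_sqrt lpNorm_nonneg hR).2 ?_
  obtain ⟨i, w, rfl⟩ := List.exists_cons_of_length_eq_add_one hw
  have hw' : w.length = j := by simpa using hw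
  have hjn : (j : ℝ) + 2 ≤ n := by exact_mod_cast hj
  have hp2 : 2 < 2 * (n : ℝ) / ((j + 1 : ℕ) : ℝ) := by
    rw [lt_div_iff₀ (by positivity)]
    push_cast
    linarith
  have hpn : 2 * (n : ℝ) / ((j + 1 : ℕ) : ℝ) ≤ 2 * n :=
    div_le_self (by positivity) (by push_cast; linarith [(j.cast_nonneg : (0 : ℝ) ≤ j)])
  have hhalf : ENNReal.ofReal (2 * (n : ℝ) / ((j + 1 : ℕ) : ℝ) / 2) =
      derivExponent n (j + (j + 2)) := by
    rw [derivExponent_eq_ofReal hn (by omega)]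
    congr 1
    push_cast
    field_simp
    ring
  have hH : ENNReal.HolderTriple (derivExponent n j) (derivExponent n (j + 2))
      (ENNReal.ofReal (2 * (n : ℝ) / ((j + 1 : ℕ) : ℝ) / 2)) :=
    hhalf ▸ holderTriple_derivExponent n j (j + 2)
  have h := SchwartzMap.lpNorm_lineDerivOp_sq_le (μ := volume) (wordDeriv w f)
    (Pi.single i 1) hp2 (derivExponent n j) (derivExponent n (j + 2))
  rw [← derivExponent_eq_ofReal hn j.succ_ne_zero] at h
  refine h.trans (mul_le_mul (by linarith) (mul_le_mul ?_ ?_ lpNorm_nonneg (derivSup_nonneg ..))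
    (mul_nonneg lpNorm_nonneg lpNorm_nonneg) (by positivity))
  · exact lpNorm_wordDeriv_le_derivSup n hw' f
  · exact lpNorm_wordDeriv_le_derivSup n (w := i :: i :: w) (by simp [hw']) f

theorem sob_nonneg (m : ℕ) (f : (Fin 3 → ℝ) → ℝ) : 0 ≤ sob m f := Real.sqrt_nonneg _

theorem exists_lpNorm_wordDeriv_mul_le {n M : ℕ} (hn : n ≤ M) :
    ∃ C ≥ 0, ∀ (u v : List (Fin 3)), u.length + v.length = n →
      ∀ (i : Fin 3) (f g : 𝓢(Fin 3 → ℝ, ℝ)),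
        lpNorm (⇑(wordDeriv u f) * ⇑(wordDeriv (v ++ [i]) g)) 2 volume ≤
          C * (sob M f * gradLinf g + linf f * sob (M + 1) g) := by
  have hlinf (f : 𝓢(Fin 3 → ℝ, ℝ)) : lpNorm f ⊤ volume = linf f :=
    (toReal_eLpNorm f.continuous.aestronglyMeasurable).symm
  rcases eq_or_ne n 0 with rfl | hn0
  · refine ⟨1, zero_le_one, fun u v huv i f g ↦ ?_⟩
    obtain rfl : u = [] := List.length_eq_zero_iff.1 (by omega)
    obtain rfl : v = [] := List.length_eq_zero_iff.1 (by omega)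
    have h := lpNorm_mul_le (r := 2) (f.memLp ⊤ volume) ((wordDeriv [i] g).memLp 2 volume)
    have h2 := lpNorm_wordDeriv_le_sob (w := [i]) (m := M + 1) (by simp) g
    have h3 : 0 ≤ sob M f * gradLinf g := mul_nonneg (sob_nonneg _ _) ENNReal.toReal_nonneg
    rw [one_mul]
    refine h.trans ?_
    rw [hlinf]
    have := mul_le_mul_of_nonneg_left h2 (show 0 ≤ linf f from ENNReal.toReal_nonneg)
    linarith
  · have h1n : (1 : ℝ) ≤ n := by exact_mod_cast Nat.one_le_iff_ne_zero.2 hn0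
    refine ⟨(2 * n) ^ n ^ 2, by positivity, fun u v huv i f g ↦ ?_⟩
    set h := wordDeriv [i] g with hh
    have hH : ENNReal.HolderTriple (derivExponent n u.length) (derivExponent n v.length) 2 := by
      have := holderTriple_derivExponent n u.length v.length
      rwa [huv, derivExponent_self hn0] at this
    rw [wordDeriv_append]
    have hfn : derivSup n n f ≤ sob M f := derivSup_le fun w hw ↦ by
      rw [derivExponent_self hn0]
      exact lpNorm_wordDeriv_le_sob (hw.trans_le hn) f
    have hgn : derivSup n n h ≤ sob (M + 1) g := derivSup_le fun w hw ↦ by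
      rw [derivExponent_self hn0, hh, ← wordDeriv_append]
      exact lpNorm_wordDeriv_le_sob (by simp; omega) g
    calc lpNorm (⇑(wordDeriv u f) * ⇑(wordDeriv v h)) 2 volume
        ≤ lpNorm (wordDeriv u f) (derivExponent n u.length) volume *
          lpNorm (wordDeriv v h) (derivExponent n v.length) volume :=
          lpNorm_mul_le ((wordDeriv u f).memLp _ _) ((wordDeriv v h).memLp _ _)
      _ ≤ derivSup n u.length f * derivSup n v.length h :=
          mul_le_mul (lpNorm_wordDeriv_le_derivSup n rfl f) (lpNorm_wordDeriv_le_derivSup n rfl h)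
            lpNorm_nonneg (derivSup_nonneg ..)
      _ ≤ (2 * n) ^ n ^ 2 *
          (derivSup n 0 f * derivSup n n h + derivSup n n f * derivSup n 0 h) :=
          mul_le_of_sq_le_mul (a := fun j ↦ derivSup n j f) (b := fun j ↦ derivSup n j h)
            (by linarith) (fun _ ↦ derivSup_nonneg ..) (fun _ ↦ derivSup_nonneg ..)
            (fun _ hj ↦ derivSup_succ_sq_le hj f) (fun _ hj ↦ derivSup_succ_sq_le hj h) huv
      _ ≤ (2 * n) ^ n ^ 2 * (linf f * sob (M + 1) g + sob M f * gradLinf g) := by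
          refine mul_le_mul_of_nonneg_left (add_le_add ?_ ?_) (by positivity)
          · exact mul_le_mul ((derivSup_zero_le n f).trans_eq (hlinf f)) hgn
              (derivSup_nonneg ..) ENNReal.toReal_nonneg
          · exact mul_le_mul hfn
              ((derivSup_zero_le n h).trans (lpNorm_top_wordDeriv_singleton_le i g))
              (derivSup_nonneg ..) (sob_nonneg _ _)
      _ = _ := by ring

theorem lpNorm_listSum_le {β α : Type*} [MeasurableSpace α] {μ : Measure α} {p : ℝ≥0∞}
    (hp : 1 ≤ p) (F : β → α → ℝ) (T : List β) {B : ℝ} (hF : ∀ t ∈ T, MemLp (F t) p μ)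
    (hB : ∀ t ∈ T, lpNorm (F t) p μ ≤ B) :
    lpNorm (fun x ↦ (T.map (F · x)).sum) p μ ≤ T.length * B := by
  induction T with
  | nil => simp
  | cons t T ih =>
    simp only [List.forall_mem_cons] at hF hB
    simp only [List.map_cons, List.sum_cons, List.length_cons]
    refine (lpNorm_add_le hF.1 hp).trans ?_
    push_cast
    linarith [ih hF.2 hB.2, hB.1]

/-- Leibniz rule: the commutator is a sum of products in which at least one derivative falls on
the second factor. -/
theorem exists_foldr_pd_mul_sub_eq (w : List (Fin 3)) :
    ∃ T : List (List (Fin 3) × List (Fin 3)),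
      (∀ t ∈ T, t.1.length + t.2.length = w.length ∧ t.2 ≠ []) ∧
      ∀ f g : 𝓢(Fin 3 → ℝ, ℝ), w.foldr pd (fun y ↦ f y * g y) = fun x ↦
        wordDeriv w f x * g x +
          (T.map fun t ↦ wordDeriv t.1 f x * wordDeriv t.2 g x).sum := by
  induction w with
  | nil => exact ⟨[], by simp, fun f g ↦ by simp [wordDeriv]⟩
  | cons i w ih =>
    obtain ⟨T, hT, h⟩ := ih
    have hprod (A B : 𝓢(Fin 3 → ℝ, ℝ)) (x : Fin 3 → ℝ) :
        HasFDerivAt (fun x ↦ A x * B x) (A x • fderiv ℝ B x + B x • fderiv ℝ A x) x :=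
      (A.hasFDerivAt x).mul (B.hasFDerivAt x)
    have hsum (f g : 𝓢(Fin 3 → ℝ, ℝ)) (T : List (List (Fin 3) × List (Fin 3)))
        (x : Fin 3 → ℝ) :
        HasFDerivAt (fun x ↦ (T.map fun t ↦ wordDeriv t.1 f x * wordDeriv t.2 g x).sum)
          (T.map fun t ↦ wordDeriv t.1 f x • fderiv ℝ (wordDeriv t.2 g) x +
            wordDeriv t.2 g x • fderiv ℝ (wordDeriv t.1 f) x).sum x := by
      induction T with
      | nil => simpa using hasFDerivAt_const (0 : ℝ) x
      | cons t T ih =>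
        simp only [List.map_cons, List.sum_cons]
        exact (hprod _ _ x).add ih
    refine ⟨(w, [i]) :: (T.map (fun t ↦ (t.1, i :: t.2)) ++ T.map fun t ↦ (i :: t.1, t.2)),
      fun t ht ↦ ?_, fun f g ↦ ?_⟩
    · simp only [List.mem_cons, List.mem_append, List.mem_map] at ht
      rcases ht with rfl | ⟨s, hs, rfl⟩ | ⟨s, hs, rfl⟩
      · simp
      · have := (hT s hs).1
        simp
        omega
      · have := hT s hs
        simp [this.2]
        omega
    · rw [List.foldr_cons, h f g]
      ext x
      have hw (v : List (Fin 3)) (k : 𝓢(Fin 3 → ℝ, ℝ)) :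
          wordDeriv (i :: v) k x = fderiv ℝ (wordDeriv v k) x (Pi.single i 1) := rfl
      have hT' (T : List (List (Fin 3) × List (Fin 3))) :
          (T.map fun t ↦ wordDeriv t.1 f x • fderiv ℝ (wordDeriv t.2 g) x +
            wordDeriv t.2 g x • fderiv ℝ (wordDeriv t.1 f) x).sum (Pi.single i 1) =
          (T.map fun t ↦ wordDeriv t.1 f x * wordDeriv (i :: t.2) g x).sum +
          (T.map fun t ↦ wordDeriv (i :: t.1) f x * wordDeriv t.2 g x).sum := by
        induction T with
        | nil => simp
        | cons t T ih =>
          simp only [List.map_cons, List.sum_cons, add_apply, ih, smul_apply, smul_eq_mul, hw]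
          ring
      have hd := ((hprod (wordDeriv w f) g x).add (hsum f g T x)).fderiv
      rw [Pi.add_def] at hd
      simp only [pd]
      rw [hd, add_apply, hT']
      simp only [List.map_cons, List.sum_cons, List.map_append, List.sum_append, List.map_map,
        Function.comp_def, add_apply, smul_apply, smul_eq_mul, hw]
      simp only [wordDeriv, List.foldr_nil]
      ring

theorem exists_l2_foldr_pd_commutator_le {w : List (Fin 3)} {M : ℕ} (hw : w.length ≤ M + 1) :
    ∃ C ≥ 0, ∀ f g : 𝓢(Fin 3 → ℝ, ℝ),
      l2 (fun x ↦ w.foldr pd (fun y ↦ f y * g y) x - w.foldr pd f x * g x) ≤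
        C * (sob M f * gradLinf g + linf f * sob (M + 1) g) := by
  obtain ⟨T, hT, h⟩ := exists_foldr_pd_mul_sub_eq w
  obtain ⟨C, hC, hCT⟩ := exists_lpNorm_wordDeriv_mul_le (n := w.length - 1) (M := M) (by omega)
  refine ⟨T.length * C, by positivity, fun f g ↦ ?_⟩
  have hmem (t : List (Fin 3) × List (Fin 3)) :
      MemLp (fun x ↦ wordDeriv t.1 f x * wordDeriv t.2 g x) 2 volume :=
    ((wordDeriv t.2 g).memLp 2 volume).smul ((wordDeriv t.1 f).memLp ⊤ volume)
  have hEq : (fun x ↦ w.foldr pd (fun y ↦ f y * g y) x - w.foldr pd f x * g x) =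
      fun x ↦ (T.map fun t ↦ wordDeriv t.1 f x * wordDeriv t.2 g x).sum := by
    ext x
    rw [h f g, ← coe_wordDeriv, add_sub_cancel_left]
  have hcont : Continuous fun x ↦ (T.map fun t ↦ wordDeriv t.1 f x * wordDeriv t.2 g x).sum :=
    continuous_list_sum _ fun t _ ↦ (wordDeriv t.1 f).continuous.mul (wordDeriv t.2 g).continuous
  rw [hEq, l2_eq_lpNorm hcont.aestronglyMeasurable, mul_assoc]
  refine lpNorm_listSum_le one_le_two
    (fun (t : List (Fin 3) × List (Fin 3)) x ↦ wordDeriv t.1 f x * wordDeriv t.2 g x) T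
    (fun t _ ↦ hmem t) fun t ht ↦ ?_
  obtain ⟨hlen, hne⟩ := hT t ht
  obtain ⟨v, i, hv⟩ := List.eq_nil_or_concat t.2 |>.resolve_left hne
  rw [List.concat_eq_append] at hv
  rw [hv] at hlen ⊢
  simp only [List.length_append, List.length_singleton] at hlen
  exact hCT t.1 v (by omega) i f g

/-- Kato–Ponce type commutator (Moser) estimate: for each integer `m ≥ 3` there is `C` with
`Σ_{|α|≤m} ‖D^α(fg) − (D^α f) g‖_{L²} ≤ C (‖f‖_{H^{m−1}} ‖∇g‖_{L^∞} + ‖f‖_{L^∞} ‖g‖_{H^m})`. -/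
theorem commutator_estimate (m : ℕ) (hm : 3 ≤ m) :
    ∃ C > 0, ∀ f g : SchwartzMap (Fin 3 → ℝ) ℝ,
      ∑ p ∈ idxSet m,
        l2 (fun x => Dmulti p.1 p.2.1 p.2.2 (fun y => f y * g y) x
          - Dmulti p.1 p.2.1 p.2.2 (fun y => f y) x * g x)
      ≤ C * (sob (m - 1) (fun y => f y) * gradLinf (fun y => g y)
          + linf (fun y => f y) * sob m (fun y => g y)) := by
  obtain ⟨M, rfl⟩ : ∃ M, m = M + 1 := ⟨m - 1, by omega⟩
  have key (p : ℕ × ℕ × ℕ) (hp : p ∈ idxSet (M + 1)) :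
      ∃ C ≥ 0, ∀ f g : 𝓢(Fin 3 → ℝ, ℝ),
        l2 (fun x => Dmulti p.1 p.2.1 p.2.2 (fun y => f y * g y) x
          - Dmulti p.1 p.2.1 p.2.2 (fun y => f y) x * g x) ≤
        C * (sob M f * gradLinf g + linf f * sob (M + 1) g) := by
    simp only [Dmulti_eq_foldr]
    refine exists_l2_foldr_pd_commutator_le ?_
    have := (Finset.mem_filter.1 hp).2
    simp
    omega
  choose! C hC h using key
  refine ⟨∑ p ∈ idxSet (M + 1), C p + 1, by linarith [Finset.sum_nonneg hC], fun f g ↦ ?_⟩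
  have hR : 0 ≤ sob M f * gradLinf g + linf f * sob (M + 1) g :=
    add_nonneg (mul_nonneg (sob_nonneg _ _) ENNReal.toReal_nonneg)
      (mul_nonneg ENNReal.toReal_nonneg (sob_nonneg _ _))
  calc _ ≤ ∑ p ∈ idxSet (M + 1), C p * (sob M f * gradLinf g + linf f * sob (M + 1) g) :=
        Finset.sum_le_sum fun p hp ↦ h p hp f g
    _ = (∑ p ∈ idxSet (M + 1), C p) * (sob M f * gradLinf g + linf f * sob (M + 1) g) := by
        rw [Finset.sum_mul]
    _ ≤ _ := by
        rw [Nat.add_sub_cancel, add_mul]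
        linarith
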